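/- arXiv:math-ph/0509020 — 2 statements merged into one kernel-verified Lean document; each statement's English description precedes it below -/
import Mathlib

section
/- Let M be a locally compact Hausdorff space and B a quasipoint of the lattice T(M) of open subsets of M. Then either M \ K ∈ B for every compact subset K of M, or there exists a unique x ∈ M such that ⋂_{U ∈ B} cl(U) = {x}, where cl(U) denotes the closure of U; in the second case every open neighbourhood of x belongs to B. -/
/-- A filter base in an ordered set `L` with least element `⊥`:
a nonempty subset not containing `⊥` in which any two elements have a common lower bound. -/
def IsFilterBase {L : Type*} [PartialOrder L] [OrderBot L] (B : Set L) : Prop :=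
  B.Nonempty ∧ ⊥ ∉ B ∧ ∀ a ∈ B, ∀ b ∈ B, ∃ c ∈ B, c ≤ a ∧ c ≤ b

/-- A quasipoint is a maximal filter base. -/
def IsQuasipoint {L : Type*} [PartialOrder L] [OrderBot L] (B : Set L) : Prop :=
  IsFilterBase B ∧ ∀ C : Set L, IsFilterBase C → B ⊆ C → C = B

/-- The set of quasipoints of `L`. -/
def Quasipoint (L : Type*) [PartialOrder L] [OrderBot L] : Type _ :=
  {B : Set L // IsQuasipoint B}

/-- The basic (cl)open set of the Stone spectrum determined by `a : L`. -/
def Qset {L : Type*} [PartialOrder L] [OrderBot L] (a : L) : Set (Quasipoint L) :=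
  {B | a ∈ B.1}

/-- The Stone topology on the set of quasipoints, generated by the sets `Qset a`. -/
instance {L : Type*} [PartialOrder L] [OrderBot L] : TopologicalSpace (Quasipoint L) :=
  TopologicalSpace.generateFrom (Set.range (Qset : L → Set (Quasipoint L)))

open TopologicalSpace

/-!
Maximality makes an open set `V` a member of `B` as soon as it meets every member of `B`. If `Kᶜ
∉ B` for some compact `K`, then some `U ∈ B` is disjoint from `Kᶜ`, i.e. contained in `K`, so
the directed family of closures of members of `B` has a common point by compactness. Every open
neighbourhood of such a point meets all members of `B`, hence belongs to `B`; as no two members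
of `B` are disjoint, the Hausdorff property leaves only one such point.
-/

theorem opens_not_disjoint_iff_inter_nonempty {M : Type*} [TopologicalSpace M] {U V : Opens M} :
    ¬Disjoint U V ↔ ((U : Set M) ∩ V).Nonempty := by
  rw [← Opens.coe_disjoint, Set.not_disjoint_iff_nonempty_inter]

namespace IsFilterBase

theorem not_disjoint {L : Type*} [PartialOrder L] [OrderBot L] {B : Set L} (hB : IsFilterBase B)
    {a b : L} (ha : a ∈ B) (hb : b ∈ B) : ¬Disjoint a b := by
  obtain ⟨-, bot_notMem, directed⟩ := hB
  obtain ⟨c, hc, hca, hcb⟩ := directed a ha b hb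
  exact fun hab => bot_notMem (le_bot_iff.1 (hab hca hcb) ▸ hc)

theorem adjoin {L : Type*} [SemilatticeInf L] [OrderBot L] {B : Set L} (hB : IsFilterBase B)
    {a : L} (ha : ∀ b ∈ B, ¬Disjoint a b) : IsFilterBase {c | ∃ b ∈ B, a ⊓ b ≤ c} := by
  obtain ⟨⟨b₀, hb₀⟩, -, directed⟩ := hB
  refine ⟨⟨a, b₀, hb₀, inf_le_left⟩, ?_, ?_⟩
  · rintro ⟨b, hb, hab⟩
    exact ha b hb (disjoint_iff_inf_le.2 hab)
  · rintro c ⟨b, hb, hc⟩ c' ⟨b', hb', hc'⟩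
    obtain ⟨d, hd, hdb, hdb'⟩ := directed b hb b' hb'
    exact ⟨a ⊓ d, ⟨d, hd, le_rfl⟩, (inf_le_inf_left a hdb).trans hc,
      (inf_le_inf_left a hdb').trans hc'⟩

theorem inter_iInter_closure_nonempty {M : Type*} [TopologicalSpace M] {B : Set (Opens M)}
    (hB : IsFilterBase B) {K : Set M} (hK : IsCompact K)
    (hKB : ∀ U ∈ B, (K ∩ U).Nonempty) : (K ∩ ⋂ U ∈ B, closure (U : Set M)).Nonempty := by
  obtain ⟨⟨U₀, hU₀⟩, -, directed⟩ := hB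
  have : Nonempty B := ⟨⟨U₀, hU₀⟩⟩
  have closure_directed : Directed (· ⊇ ·) fun U : B => closure (U : Set M) := by
    rintro ⟨U, hU⟩ ⟨V, hV⟩
    obtain ⟨W, hW, hWU, hWV⟩ := directed U hU V hV
    exact ⟨⟨W, hW⟩, closure_mono hWU, closure_mono hWV⟩
  rw [Set.biInter_eq_iInter]
  by_contra h
  obtain ⟨⟨U, hU⟩, hKU⟩ := hK.elim_directed_family_closed
    (fun U : B => closure (U : Set M)) (fun _ => isClosed_closure)
    (Set.not_nonempty_iff_eq_empty.1 h) closure_directed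
  exact ((hKB U hU).mono (Set.inter_subset_inter_right K subset_closure)).ne_empty hKU

end IsFilterBase

namespace IsQuasipoint

theorem mem_iff {L : Type*} [SemilatticeInf L] [OrderBot L] {B : Set L} (hB : IsQuasipoint B)
    {a : L} : a ∈ B ↔ ∀ b ∈ B, ¬Disjoint a b := by
  obtain ⟨filterBase, maximal⟩ := hB
  refine ⟨fun ha b hb => filterBase.not_disjoint ha hb, fun ha => ?_⟩
  obtain ⟨b₀, hb₀⟩ := filterBase.1
  rw [← maximal _ (filterBase.adjoin ha) fun b hb => ⟨b, hb, inf_le_right⟩]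
  exact ⟨b₀, hb₀, inf_le_left⟩

variable {M : Type*} [TopologicalSpace M] {B : Set (Opens M)}

theorem mem_iInter_closure_iff (hB : IsQuasipoint B) {x : M} :
    x ∈ ⋂ U ∈ B, closure (U : Set M) ↔ ∀ V : Opens M, x ∈ V → V ∈ B := by
  simp only [Set.mem_iInter, mem_closure_iff]
  constructor
  · intro hx V hxV
    exact hB.mem_iff.2 fun U hU => opens_not_disjoint_iff_inter_nonempty.2
      (hx U hU V V.isOpen hxV)
  · intro hx U hU V hV hxV
    exact opens_not_disjoint_iff_inter_nonempty.1 (hB.1.not_disjoint (hx ⟨V, hV⟩ hxV) hU)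

theorem iInter_closure_subsingleton [T2Space M] (hB : IsQuasipoint B) :
    (⋂ U ∈ B, closure (U : Set M)).Subsingleton := by
  intro x hx y hy
  by_contra hxy
  obtain ⟨U, V, hU, hV, hxU, hyV, hUV⟩ := t2_separation hxy
  exact hB.1.not_disjoint (hB.mem_iInter_closure_iff.1 hx ⟨U, hU⟩ hxU)
    (hB.mem_iInter_closure_iff.1 hy ⟨V, hV⟩ hyV) (Opens.coe_disjoint.1 hUV)

theorem iInter_closure_nonempty_of_notMem (hB : IsQuasipoint B) {K : Set M} (hK : IsCompact K)
    {V : Opens M} (hKV : Kᶜ ⊆ V) (hV : V ∉ B) :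
    (⋂ U ∈ B, closure (U : Set M)).Nonempty := by
  obtain ⟨U₀, hU₀, hVU₀⟩ : ∃ U₀ ∈ B, Disjoint V U₀ := by
    have hVB := mt hB.mem_iff.2 hV
    push Not at hVB
    exact hVB
  have hU₀K : (U₀ : Set M) ⊆ K :=
    Set.disjoint_compl_left_iff_subset.1 ((Opens.coe_disjoint.2 hVU₀).mono_left hKV)
  have hKB : ∀ U ∈ B, (K ∩ U).Nonempty := fun U hU =>
    (opens_not_disjoint_iff_inter_nonempty.1 (hB.1.not_disjoint hU₀ hU)).mono
      (Set.inter_subset_inter_left U hU₀K)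
  exact (hB.1.inter_iInter_closure_nonempty hK hKB).right

end IsQuasipoint

theorem quasipoint_opens_dichotomy_general {M : Type*} [TopologicalSpace M] [T2Space M]
    (B : Set (Opens M)) (hB : IsQuasipoint B) :
    (∀ K : Set M, (hK : IsCompact K) →
        (⟨Kᶜ, hK.isClosed.isOpen_compl⟩ : Opens M) ∈ B) ∨
    (∃! x : M, (⋂ U ∈ B, closure (U : Set M)) = {x} ∧
        ∀ V : Opens M, x ∈ V → V ∈ B) := by
  refine or_iff_not_imp_left.2 fun hcompact => ?_
  push Not at hcompact
  obtain ⟨K, hK, hKB⟩ := hcompact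
  obtain ⟨x, hx⟩ := hB.iInter_closure_nonempty_of_notMem hK subset_rfl hKB
  have heq : (⋂ U ∈ B, closure (U : Set M)) = {x} :=
    hB.iInter_closure_subsingleton.eq_singleton_of_mem hx
  exact ⟨x, ⟨heq, hB.mem_iInter_closure_iff.1 hx⟩,
    fun y hy => Set.singleton_injective (hy.1.symm.trans heq)⟩

/-- Let `M` be a locally compact Hausdorff space and `B` a quasipoint of the lattice of open
subsets of `M`. Then either `M \ K ∈ B` for every compact `K ⊆ M`, or there is a unique `x ∈ M`
with `⋂_{U ∈ B} cl U = {x}`, and in that case every open neighbourhood of `x` belongs to `B`. -/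
theorem quasipoint_opens_dichotomy {M : Type*} [TopologicalSpace M] [T2Space M]
    [LocallyCompactSpace M] (B : Set (Opens M)) (hB : IsQuasipoint B) :
    (∀ K : Set M, (hK : IsCompact K) →
        (⟨Kᶜ, hK.isClosed.isOpen_compl⟩ : Opens M) ∈ B) ∨
    (∃! x : M, (⋂ U ∈ B, closure (U : Set M)) = {x} ∧
        ∀ V : Opens M, x ∈ V → V ∈ B) :=
  quasipoint_opens_dichotomy_general B hB
end

section
/- Let M be a topological space. For every quasipoint B of the lattice T(M) of open subsets of M, the set B^r := {int(cl(U)) : U ∈ B} is a quasipoint of the lattice T_r(M) of regular open subsets of M, every quasipoint of T_r(M) is contained in exactly one quasipoint of T(M), and the map ρ : B ↦ B^r is a bijection from the set of quasipoints of T(M) onto the set of quasipoints of T_r(M) which is a homeomorphism between the Stone spectrum of T(M) and the Stone spectrum of T_r(M); explicitly, ρ(Q_U(T(M))) = Q_{int(cl(U))}(T_r(M)) for every open U and ρ^{-1}(Q_W(T_r(M))) = Q_W(T(M)) for every regular open W. -/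
open TopologicalSpace

/-- The lattice of regular open subsets of `M` (ordered by inclusion). -/
def RegOpens (M : Type*) [TopologicalSpace M] : Type _ :=
  {U : Opens M // (U : Set M) = interior (closure (U : Set M))}

instance {M : Type*} [TopologicalSpace M] : PartialOrder (RegOpens M) :=
  inferInstanceAs (PartialOrder {U : Opens M // (U : Set M) = interior (closure (U : Set M))})

instance {M : Type*} [TopologicalSpace M] : OrderBot (RegOpens M) where
  bot := ⟨⊥, by simp⟩
  bot_le U := show (⊥ : Opens M) ≤ U.1 from bot_le

private theorem interior_closure_regular {M : Type*} [TopologicalSpace M] (s : Set M) :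
    interior (closure (interior (closure s))) = interior (closure s) := by
  refine le_antisymm (interior_mono ?_) (interior_maximal subset_closure isOpen_interior)
  simpa using closure_mono (interior_subset : interior (closure s) ⊆ closure s)

/-- The regularization `U ↦ int (cl U)` of an open set, as a regular open set. -/
def regOpen {M : Type*} [TopologicalSpace M] (U : Opens M) : RegOpens M :=
  ⟨⟨interior (closure (U : Set M)), isOpen_interior⟩,
    (interior_closure_regular (U : Set M)).symm⟩

/-! The regularization `U ↦ int (cl U)` is a surjective homomorphism of meet-semilattices that sends
only `∅` to `∅`. For any such `φ : L → S`, images of filter bases are filter bases, and so are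
preimages of *upward closed* filter bases. Quasipoints are upward closed, so `B ↦ φ '' B` and
`R ↦ φ ⁻¹' R` preserve maximality and are mutually inverse, and they match the basic open set of `a`
with that of `φ a`. -/

theorem map_bot_of_monotone_of_surjective {α β : Type*} [Preorder α] [OrderBot α]
    [PartialOrder β] [OrderBot β] {f : α → β} (hf : Monotone f) (hsurj : Function.Surjective f) :
    f ⊥ = ⊥ := by
  obtain ⟨a, ha⟩ := hsurj ⊥
  exact le_bot_iff.1 (ha ▸ hf bot_le)

section FilterBase

variable {L : Type*} [PartialOrder L] [OrderBot L] {B : Set L}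

theorem IsFilterBase.upperClosure (hB : IsFilterBase B) :
    IsFilterBase (upperClosure B : Set L) := by
  obtain ⟨hne, hbot, hdir⟩ := hB
  refine ⟨hne.mono subset_upperClosure, ?_, ?_⟩
  · rintro ⟨b, hb, hb_le⟩
    exact hbot (le_bot_iff.1 hb_le ▸ hb)
  · rintro x ⟨a, ha, hax⟩ y ⟨b, hb, hby⟩
    obtain ⟨c, hc, hca, hcb⟩ := hdir a ha b hb
    exact ⟨c, subset_upperClosure hc, hca.trans hax, hcb.trans hby⟩

theorem IsQuasipoint.isUpperSet (hB : IsQuasipoint B) : IsUpperSet B :=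
  hB.2 _ hB.1.upperClosure subset_upperClosure ▸ (upperClosure B).upper

theorem IsFilterBase.image {S : Type*} [PartialOrder S] [OrderBot S] {φ : L → S}
    (hB : IsFilterBase B) (hφ : Monotone φ) (hbot : ∀ a, φ a = ⊥ → a = ⊥) :
    IsFilterBase (φ '' B) := by
  obtain ⟨hne, hbotB, hdir⟩ := hB
  refine ⟨hne.image φ, ?_, ?_⟩
  · rintro ⟨a, ha, hφa⟩
    exact hbotB (hbot a hφa ▸ ha)
  · rintro _ ⟨a, ha, rfl⟩ _ ⟨b, hb, rfl⟩
    obtain ⟨c, hc, hca, hcb⟩ := hdir a ha b hb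
    exact ⟨φ c, Set.mem_image_of_mem φ hc, hφ hca, hφ hcb⟩

theorem isOpen_Qset (a : L) : IsOpen (Qset a) :=
  isOpen_generateFrom_of_mem ⟨a, rfl⟩

end FilterBase

theorem IsFilterBase.inf_mem {L : Type*} [SemilatticeInf L] [OrderBot L] {B : Set L}
    (hB : IsFilterBase B) (hup : IsUpperSet B) {a b : L} (ha : a ∈ B) (hb : b ∈ B) :
    a ⊓ b ∈ B :=
  let ⟨_, hc, hca, hcb⟩ := hB.2.2 a ha b hb
  hup (le_inf hca hcb) hc

section InfHom

variable {L S : Type*} [SemilatticeInf L] [OrderBot L] [SemilatticeInf S] [OrderBot S]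
  {φ : InfHom L S} {B : Set L} {R : Set S}

theorem IsFilterBase.preimage (hR : IsFilterBase R) (hup : IsUpperSet R)
    (hφ : Function.Surjective φ) : IsFilterBase (φ ⁻¹' R) := by
  refine ⟨hR.1.preimage hφ, ?_, fun a ha b hb => ⟨a ⊓ b, ?_, inf_le_left, inf_le_right⟩⟩
  · rw [Set.mem_preimage, map_bot_of_monotone_of_surjective (OrderHomClass.mono φ) hφ]
    exact hR.2.1
  · rw [Set.mem_preimage, map_inf]
    exact hR.inf_mem hup ha hb

theorem IsQuasipoint.preimage (hR : IsQuasipoint R) (hφ : Function.Surjective φ)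
    (hbot : ∀ a, φ a = ⊥ → a = ⊥) : IsQuasipoint (φ ⁻¹' R) := by
  refine ⟨hR.1.preimage hR.isUpperSet hφ, fun C hC hRC => hRC.antisymm' ?_⟩
  have hR_sub : R ⊆ φ '' C := by
    simpa only [Set.image_preimage_eq R hφ] using Set.image_mono (f := φ) hRC
  exact Set.image_subset_iff.1 (hR.2 _ (hC.image (OrderHomClass.mono φ) hbot) hR_sub).subset

theorem IsQuasipoint.image (hB : IsQuasipoint B) (hφ : Function.Surjective φ)
    (hbot : ∀ a, φ a = ⊥ → a = ⊥) : IsQuasipoint (φ '' B) := by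
  refine ⟨hB.1.image (OrderHomClass.mono φ) hbot, fun C hC hBC => hBC.antisymm' ?_⟩
  have hpre : φ ⁻¹' (upperClosure C) = B :=
    hB.2 _ (hC.upperClosure.preimage (upperClosure C).upper hφ)
      (Set.image_subset_iff.1 (hBC.trans subset_upperClosure))
  calc
    C ⊆ upperClosure C := subset_upperClosure
    _ = φ '' (φ ⁻¹' (upperClosure C)) := (Set.image_preimage_eq _ hφ).symm
    _ = φ '' B := by rw [hpre]

theorem IsQuasipoint.preimage_image (hB : IsQuasipoint B) (hφ : Function.Surjective φ)
    (hbot : ∀ a, φ a = ⊥ → a = ⊥) : φ ⁻¹' (φ '' B) = B :=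
  have himage := hB.image hφ hbot
  hB.2 _ (himage.1.preimage himage.isUpperSet hφ) (Set.subset_preimage_image φ B)

theorem IsQuasipoint.image_subset_iff_image_eq (hB : IsQuasipoint B) (hR : IsQuasipoint R)
    {ι : S → L} (hι : Function.RightInverse ι φ) (hbot : ∀ a, φ a = ⊥ → a = ⊥) :
    ι '' R ⊆ B ↔ φ '' B = R := by
  constructor
  · intro h
    refine hR.2 _ (hB.1.image (OrderHomClass.mono φ) hbot) fun r hr => ?_
    exact ⟨ι r, h (Set.mem_image_of_mem ι hr), hι r⟩
  · rintro rfl _ ⟨r, hr, rfl⟩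
    rwa [← hB.preimage_image hι.surjective hbot, Set.mem_preimage, hι r]

namespace Quasipoint

variable (φ) (hφ : Function.Surjective φ) (hbot : ∀ a, φ a = ⊥ → a = ⊥)

/-- The bijection `B ↦ φ '' B` between quasipoints induced by a surjective meet-homomorphism `φ`
that sends only `⊥` to `⊥`. -/
def mapEquiv : Quasipoint L ≃ Quasipoint S where
  toFun B := ⟨φ '' B.1, B.2.image hφ hbot⟩
  invFun R := ⟨φ ⁻¹' R.1, R.2.preimage hφ hbot⟩
  left_inv B := Subtype.ext (B.2.preimage_image hφ hbot)
  right_inv R := Subtype.ext (Set.image_preimage_eq R.1 hφ)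

theorem mapEquiv_image_Qset (a : L) : mapEquiv φ hφ hbot '' Qset a = Qset (φ a) :=
  (mapEquiv φ hφ hbot).image_eq_preimage_symm (Qset a)

theorem mapEquiv_preimage_Qset (a : L) : mapEquiv φ hφ hbot ⁻¹' Qset (φ a) = Qset a := by
  rw [← mapEquiv_image_Qset φ hφ hbot, Equiv.preimage_image]

/-- `mapEquiv` as a homeomorphism of Stone spectra. -/
def mapHomeomorph : Quasipoint L ≃ₜ Quasipoint S where
  toEquiv := mapEquiv φ hφ hbot
  continuous_toFun := continuous_generateFrom_iff.2 <| by
    rintro _ ⟨s, rfl⟩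
    obtain ⟨a, rfl⟩ := hφ s
    exact mapEquiv_preimage_Qset φ hφ hbot a ▸ isOpen_Qset a
  continuous_invFun := continuous_generateFrom_iff.2 <| by
    rintro _ ⟨a, rfl⟩
    exact isOpen_Qset (φ a)

end Quasipoint

theorem stoneSpectrum_opens_homeo_regOpens_general (φ : InfHom L S) {ι : S → L}
    (hι : Function.RightInverse ι φ) (hbot : ∀ a, φ a = ⊥ → a = ⊥) :
    (∀ B : Quasipoint L, IsQuasipoint (φ '' B.1)) ∧
    (∀ R : Quasipoint S, ∃! B : Quasipoint L, ι '' R.1 ⊆ B.1) ∧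
    ∃ h : Quasipoint L ≃ₜ Quasipoint S,
      (∀ B : Quasipoint L, (h B).1 = φ '' B.1) ∧
      (∀ a : L, h '' Qset a = Qset (φ a)) ∧
      (∀ s : S, h ⁻¹' Qset s = Qset (ι s)) := by
  have hφ : Function.Surjective φ := hι.surjective
  let h := Quasipoint.mapHomeomorph φ hφ hbot
  refine ⟨fun B => B.2.image hφ hbot, fun R => ?_, h, fun _ => rfl,
    Quasipoint.mapEquiv_image_Qset φ hφ hbot, fun s => ?_⟩
  · have hfiber (B : Quasipoint L) : ι '' R.1 ⊆ B.1 ↔ h B = R :=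
      (B.2.image_subset_iff_image_eq R.2 hι hbot).trans (Subtype.ext_iff (a1 := h B)).symm
    simpa only [hfiber] using h.bijective.existsUnique R
  · rw [← Quasipoint.mapEquiv_preimage_Qset φ hφ hbot (ι s), hι s]
    rfl

end InfHom

theorem interior_closure_inter_of_isOpen_left {X : Type*} [TopologicalSpace X] {s t : Set X}
    (hs : IsOpen s) :
    interior (closure (s ∩ t)) = interior (closure s) ∩ interior (closure t) := by
  refine Set.Subset.antisymm ?_ ?_
  · exact Set.subset_inter (interior_mono (closure_mono Set.inter_subset_left))
      (interior_mono (closure_mono Set.inter_subset_right))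
  · refine interior_maximal ?_ (isOpen_interior.inter isOpen_interior)
    calc
      interior (closure s) ∩ interior (closure t)
        ⊆ closure s ∩ interior (closure t) := Set.inter_subset_inter_left _ interior_subset
      _ ⊆ closure (s ∩ interior (closure t)) := isOpen_interior.closure_inter
      _ ⊆ closure (s ∩ closure t) := closure_mono (Set.inter_subset_inter_right _ interior_subset)
      _ ⊆ closure (s ∩ t) := closure_minimal hs.inter_closure isClosed_closure

section RegOpens

variable {M : Type*} [TopologicalSpace M]

instance : SemilatticeInf (RegOpens M) where
  inf V W := ⟨V.1 ⊓ W.1,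
    (congrArg₂ (· ∩ ·) V.2 W.2).trans (interior_closure_inter_of_isOpen_left V.1.2).symm⟩
  inf_le_left V W := (inf_le_left : V.1 ⊓ W.1 ≤ V.1)
  inf_le_right V W := (inf_le_right : V.1 ⊓ W.1 ≤ W.1)
  le_inf U V W hV hW := (le_inf hV hW : U.1 ≤ V.1 ⊓ W.1)

theorem regOpen_inf (U V : Opens M) : regOpen (U ⊓ V) = regOpen U ⊓ regOpen V :=
  Subtype.ext (Opens.ext (interior_closure_inter_of_isOpen_left U.2))

theorem regOpen_val (W : RegOpens M) : regOpen W.1 = W :=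
  Subtype.ext (Opens.ext W.2.symm)

theorem le_regOpen_val (U : Opens M) : U ≤ (regOpen U).1 :=
  U.2.subset_interior_closure

theorem eq_bot_of_regOpen_eq_bot (U : Opens M) (hU : regOpen U = ⊥) : U = ⊥ :=
  le_bot_iff.1 ((le_regOpen_val U).trans_eq (congrArg Subtype.val hU))

/-- The regularization `regOpen` as a homomorphism of meet-semilattices. -/
def regOpenInfHom (M : Type*) [TopologicalSpace M] : InfHom (Opens M) (RegOpens M) where
  toFun := regOpen
  map_inf' := regOpen_inf

end RegOpens

/-- For every quasipoint `B` of the lattice `T(M)` of open sets of `M`, the set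
`B^r = {int (cl U) : U ∈ B}` is a quasipoint of the lattice `T_r(M)` of regular open sets;
every quasipoint of `T_r(M)` is contained in exactly one quasipoint of `T(M)`; and
`ρ : B ↦ B^r` is a bijection between the two sets of quasipoints which is a homeomorphism of
the Stone spectra, with `ρ(Q_U(T(M))) = Q_{int (cl U)}(T_r(M))` for every open `U` and
`ρ⁻¹(Q_W(T_r(M))) = Q_W(T(M))` for every regular open `W`. -/
theorem stoneSpectrum_opens_homeo_regOpens {M : Type*} [TopologicalSpace M] :
    (∀ B : Quasipoint (Opens M), IsQuasipoint (regOpen '' B.1)) ∧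
    (∀ R : Quasipoint (RegOpens M),
      ∃! B : Quasipoint (Opens M), (fun W : RegOpens M => W.1) '' R.1 ⊆ B.1) ∧
    ∃ h : Quasipoint (Opens M) ≃ₜ Quasipoint (RegOpens M),
      (∀ B : Quasipoint (Opens M), (h B).1 = regOpen '' B.1) ∧
      (∀ U : Opens M, h '' Qset U = Qset (regOpen U)) ∧
      (∀ W : RegOpens M, h ⁻¹' Qset W = Qset W.1) :=
  stoneSpectrum_opens_homeo_regOpens_general (regOpenInfHom M) regOpen_val eq_bot_of_regOpen_eq_bot
end
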